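/- arXiv:0710.5004 — 3 statements merged into one kernel-verified Lean document; each statement's English description precedes it below -/
import Mathlib

section
/- If L : ℝ → ℝ is slowly varying, then log L(x) = o(log x) as x → ∞; that is, (log L(x))/(log x) → 0 as x → ∞. -/
open Filter MeasureTheory

/-!
With `h y = log ‖L (exp y)‖`, slow variation says that `h (y + s) - h y → 0` as `y → ∞` for each
fixed `s`. On a bounded window of shifts, pointwise convergence implies convergence in measure.
Hence, for large `y` and bounded `s`, few points `y + u` have `h (y + u)` far from `h y`, and few
have `h (y + u)` far from `h (y + s)`. Some `y + u` is therefore close to both, which makes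
`h (y + s) - h y` small uniformly in `s`. Summing increments over steps of length at most one
gives `h y = o(y)`.
-/

open Topology Metric

theorem tendstoInMeasure_of_tendsto_ae_of_isCountablyGenerated {α ι E : Type*}
    {_ : MeasurableSpace α} {μ : Measure α} [IsFiniteMeasure μ] [PseudoEMetricSpace E]
    {l : Filter ι} [l.IsCountablyGenerated] {f : ι → α → E} {g : α → E}
    (hf : ∀ i, AEStronglyMeasurable (f i) μ)
    (hfg : ∀ᵐ x ∂μ, Tendsto (fun i => f i x) l (𝓝 (g x))) :
    TendstoInMeasure μ f l g := fun ε hε =>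
  tendsto_of_seq_tendsto fun u hu =>
    tendstoInMeasure_of_tendsto_ae (fun n => hf (u n)) (hfg.mono fun _ hx => hx.comp hu) ε hε

theorem quasiMeasurePreserving_exp : Measure.QuasiMeasurePreserving Real.exp := by
  refine ⟨Real.measurable_exp, Measure.AbsolutelyContinuous.mk fun s hs hs_null => ?_⟩
  rw [Measure.map_apply Real.measurable_exp hs]
  have himage : volume (Real.log '' (s ∩ {0}ᶜ)) = 0 :=
    addHaar_image_eq_zero_of_differentiableOn_of_addHaar_eq_zero volume
      (Real.differentiableOn_log.mono Set.inter_subset_right)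
      (measure_mono_null Set.inter_subset_left hs_null)
  have hsub : Real.exp ⁻¹' s ⊆ Real.log '' (s ∩ {0}ᶜ) := fun y hy =>
    ⟨Real.exp y, ⟨hy, Real.exp_ne_zero y⟩, Real.log_exp y⟩
  exact measure_mono_null hsub himage

section Increments

variable {E : Type*} [SeminormedAddCommGroup E] {h : ℝ → E}

theorem tendsto_volume_setOf_le_norm_increment (hm : AEStronglyMeasurable h)
    (hinc : ∀ s, Tendsto (fun y => h (y + s) - h y) atTop (𝓝 0)) (r : ℝ) {ε : ℝ} (hε : 0 < ε) :
    Tendsto (fun y => volume {t ∈ closedBall 0 r | ε ≤ ‖h (y + t) - h y‖}) atTop (𝓝 0) := by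
  have hmeas (y : ℝ) : AEStronglyMeasurable (fun t => h (y + t) - h y) :=
    (hm.comp_quasiMeasurePreserving (quasiMeasurePreserving_add_left volume y)).sub
      aestronglyMeasurable_const
  have : IsFiniteMeasure (volume.restrict (closedBall (0 : ℝ) r)) :=
    isFiniteMeasure_restrict.2 measure_closedBall_lt_top.ne
  have hconv : TendstoInMeasure (volume.restrict (closedBall (0 : ℝ) r))
      (fun y t => h (y + t) - h y) atTop (fun _ => 0) :=
    tendstoInMeasure_of_tendsto_ae_of_isCountablyGenerated (fun y => (hmeas y).restrict)
      (ae_of_all _ hinc)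
  refine (tendstoInMeasure_iff_norm.1 hconv ε hε).congr fun y => ?_
  rw [Measure.restrict_apply' measurableSet_closedBall, Set.inter_comm]
  simp only [sub_zero]
  rfl

theorem norm_increment_lt_of_volume_lt {r ε y s : ℝ} (hs : s ∈ closedBall 0 r)
    (hy : volume {t ∈ closedBall 0 (r + 1) | ε ≤ ‖h (y + t) - h y‖} < 1)
    (hys : volume {t ∈ closedBall 0 (r + 1) | ε ≤ ‖h (y + s + t) - h (y + s)‖} < 1) :
    ‖h (y + s) - h y‖ < ε + ε := by
  set A := {t ∈ closedBall 0 (r + 1) | ε ≤ ‖h (y + t) - h y‖}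
  set B := {t ∈ closedBall 0 (r + 1) | ε ≤ ‖h (y + s + t) - h (y + s)‖}
  have hvol : volume (A ∪ (· - s) ⁻¹' B) < volume (closedBall (0 : ℝ) 1) := calc
    _ ≤ volume A + volume ((· - s) ⁻¹' B) := measure_union_le _ _
    _ = volume A + volume B := by simp only [sub_eq_add_neg, measure_preimage_add_right]
    _ < 1 + 1 := ENNReal.add_lt_add hy hys
    _ = volume (closedBall (0 : ℝ) 1) := by
      rw [Real.volume_closedBall, mul_one, ENNReal.ofReal_ofNat, one_add_one_eq_two]
  obtain ⟨u, hu, huAB⟩ : ∃ u ∈ closedBall (0 : ℝ) 1, u ∉ A ∪ (· - s) ⁻¹' B :=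
    Set.not_subset.1 fun hsub => (measure_mono hsub).not_gt hvol
  rw [mem_closedBall_zero_iff] at hs hu
  have huA : ‖h (y + u) - h y‖ < ε := by
    by_contra! hle
    exact huAB (.inl ⟨mem_closedBall_zero_iff.2 (by linarith [norm_nonneg s]), hle⟩)
  have huB : ‖h (y + u) - h (y + s)‖ < ε := by
    by_contra! hle
    refine huAB (.inr ⟨mem_closedBall_zero_iff.2 (by linarith [norm_sub_le u s]), ?_⟩)
    rwa [add_assoc, add_sub_cancel]
  calc ‖h (y + s) - h y‖ ≤ ‖h (y + s) - h (y + u)‖ + ‖h (y + u) - h y‖ :=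
        norm_sub_le_norm_sub_add_norm_sub _ _ _
    _ < ε + ε := add_lt_add (by rwa [norm_sub_rev]) huA

theorem tendstoUniformlyOn_increment (hm : AEStronglyMeasurable h)
    (hinc : ∀ s, Tendsto (fun y => h (y + s) - h y) atTop (𝓝 0))
    {K : Set ℝ} (hK : Bornology.IsBounded K) :
    TendstoUniformlyOn (fun y s => h (y + s) - h y) 0 atTop K := by
  obtain ⟨r, hKr⟩ := hK.subset_closedBall 0
  refine Metric.tendstoUniformlyOn_iff.2 fun ε hε => ?_
  obtain ⟨Y, hY⟩ := eventually_atTop.1 <|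
    (tendsto_volume_setOf_le_norm_increment hm hinc (r + 1) (half_pos hε)).eventually_lt_const
      one_pos
  filter_upwards [eventually_ge_atTop Y, eventually_ge_atTop (Y + r)] with y hy hyr s hs
  have hsr : |s| ≤ r := mem_closedBall_zero_iff.1 (hKr hs)
  rw [Pi.zero_apply, dist_zero_left, ← add_halves ε]
  exact norm_increment_lt_of_volume_lt (hKr hs) (hY y hy)
    (hY (y + s) (by linarith [neg_le_of_abs_le hsr]))

theorem norm_sub_le_mul_add_one_of_norm_increment_le {X C : ℝ}
    (hC : ∀ y ≥ X, ∀ s ∈ Set.Icc (0 : ℝ) 1, ‖h (y + s) - h y‖ ≤ C) {y : ℝ} (hy : X ≤ y) :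
    ‖h y - h X‖ ≤ C * (y - X + 1) := by
  set n := ⌊y - X⌋₊
  have hn : (n : ℝ) ≤ y - X := Nat.floor_le (sub_nonneg.2 hy)
  have hn_lt : y - X < n + 1 := Nat.lt_floor_add_one _
  have hC_nonneg : 0 ≤ C := (norm_nonneg _).trans (hC X le_rfl 0 (by simp))
  have hunit (k : ℕ) : dist (h (X + k)) (h (X + (k + 1 : ℕ))) ≤ C := by
    rw [dist_comm, dist_eq_norm_sub, Nat.cast_succ, ← add_assoc]
    exact hC _ (by simp) 1 (by simp)
  have hfloor : ‖h (X + n) - h X‖ ≤ n * C := by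
    simpa [dist_eq_norm_sub, norm_sub_rev] using
      dist_le_range_sum_of_dist_le (f := fun k : ℕ => h (X + k)) n fun _ => hunit _
  have hfract : ‖h y - h (X + n)‖ ≤ C := by
    simpa using hC (X + n) (by simp) (y - (X + n)) ⟨by linarith, by linarith⟩
  calc ‖h y - h X‖ ≤ ‖h y - h (X + n)‖ + ‖h (X + n) - h X‖ :=
        norm_sub_le_norm_sub_add_norm_sub _ _ _
    _ ≤ C + n * C := add_le_add hfract hfloor
    _ = C * (n + 1) := by ring
    _ ≤ C * (y - X + 1) := by gcongr

theorem isLittleO_id_of_tendsto_increment (hm : AEStronglyMeasurable h)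
    (hinc : ∀ s, Tendsto (fun y => h (y + s) - h y) atTop (𝓝 0)) :
    h =o[atTop] (id : ℝ → ℝ) := by
  refine Asymptotics.isLittleO_iff.2 fun ε hε => ?_
  have hunif := Metric.tendstoUniformlyOn_iff.1
    (tendstoUniformlyOn_increment hm hinc (isBounded_Icc (0 : ℝ) 1)) (ε / 2) (half_pos hε)
  obtain ⟨X, hX⟩ := eventually_atTop.1 hunif
  have hinc_le : ∀ y ≥ X, ∀ s ∈ Set.Icc (0 : ℝ) 1, ‖h (y + s) - h y‖ ≤ ε / 2 :=
    fun y hy s hs => by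
      simpa only [Pi.zero_apply, dist_zero_left] using (hX y hy s hs).le
  have hconst : ∀ᶠ y in atTop, ‖h X‖ + ε / 2 * (1 - X) ≤ ε / 2 * y :=
    (tendsto_id.const_mul_atTop (half_pos hε)).eventually_ge_atTop _
  filter_upwards [hconst, eventually_ge_atTop X, eventually_ge_atTop 0] with y hy hXy hy_nonneg
  calc ‖h y‖ ≤ ‖h X‖ + ‖h y - h X‖ := norm_le_norm_add_norm_sub' _ _
    _ ≤ ‖h X‖ + ε / 2 * (y - X + 1) := by
      gcongr
      exact norm_sub_le_mul_add_one_of_norm_increment_le hinc_le hXy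
    _ ≤ ε * y := by linarith
    _ = ε * ‖id y‖ := by rw [id, Real.norm_of_nonneg hy_nonneg]

end Increments

section SlowlyVarying

variable {𝕜 : Type*} [NormedField 𝕜] {L : ℝ → 𝕜}

theorem tendsto_log_norm_sub_log_norm {α : Type*} {l : Filter α} {f g : α → 𝕜}
    (hfg : Tendsto (fun x => f x / g x) l (𝓝 1)) :
    Tendsto (fun x => Real.log ‖f x‖ - Real.log ‖g x‖) l (𝓝 0) := by
  have hlog : Tendsto (fun x => Real.log ‖f x / g x‖) l (𝓝 0) := by
    simpa using hfg.norm.log (by simp)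
  refine hlog.congr' ?_
  filter_upwards [hfg.eventually_ne one_ne_zero] with x hx
  obtain ⟨hf, hg⟩ := div_ne_zero_iff.1 hx
  rw [norm_div, Real.log_div (norm_ne_zero_iff.2 hf) (norm_ne_zero_iff.2 hg)]

theorem slowly_varying_log_isLittleO_log_general (hmeas : AEStronglyMeasurable L)
    (hslow : ∀ t : ℝ, 0 < t → Tendsto (fun x => L (t * x) / L x) atTop (𝓝 1)) :
    Tendsto (fun x => Real.log ‖L x‖ / Real.log x) atTop (𝓝 0) := by
  have hm : AEStronglyMeasurable fun y => Real.log ‖L (Real.exp y)‖ :=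
    (Real.measurable_log.comp_aemeasurable (hmeas.comp_quasiMeasurePreserving
      quasiMeasurePreserving_exp).norm.aemeasurable).aestronglyMeasurable
  have hinc (s : ℝ) : Tendsto
      (fun y => Real.log ‖L (Real.exp (y + s))‖ - Real.log ‖L (Real.exp y)‖) atTop (𝓝 0) := by
    simp only [add_comm _ s, Real.exp_add]
    exact tendsto_log_norm_sub_log_norm
      ((hslow (Real.exp s) (Real.exp_pos s)).comp Real.tendsto_exp_atTop)
  have hlim := (isLittleO_id_of_tendsto_increment hm hinc).tendsto_div_nhds_zero.comp
    Real.tendsto_log_atTop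
  refine hlim.congr' ?_
  filter_upwards [eventually_gt_atTop 0] with x hx
  simp only [Function.comp_apply, id, Real.exp_log hx]

end SlowlyVarying

/-- If `L : ℝ → ℝ` is slowly varying (measurable, eventually positive, and
`L(tx)/L(x) → 1` as `x → ∞` for every `t > 0`), then `log L(x) / log x → 0` as `x → ∞`. -/
theorem slowly_varying_log_isLittleO_log (L : ℝ → ℝ)
    (hmeas : Measurable L)
    (hpos : ∀ᶠ x in atTop, 0 < L x)
    (hslow : ∀ t : ℝ, 0 < t →
      Tendsto (fun x => L (t * x) / L x) atTop (nhds 1)) :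
    Tendsto (fun x => Real.log (L x) / Real.log x) atTop (nhds 0) := by
  simpa only [Real.norm_eq_abs, Real.log_abs] using
    slowly_varying_log_isLittleO_log_general hmeas.aestronglyMeasurable hslow
end

section
/- Fix n ≥ 1, 1 ≤ k ≤ n, and 1 ≤ i ≤ n − k + 1. The number of sequences (i_1, …, i_n) of positive integers satisfying i_n = 1 and i_j ∈ {i_{j+1}, i_{j+1} + 1} for all 1 ≤ j ≤ n − 1, and additionally i_k = i, is exactly C(n−k, i−1) · 2^{k−1}, where C denotes the binomial coefficient. -/
/-
A scan is determined by its descents, the steps from `j` to `j + 1` at which the starting index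
drops by one, and any subset of the `n - 1` steps occurs. The value `i_k` is one more than the
number of descents from `k` on, so `i_k = i` asks for exactly `i - 1` descents among the last
`n - k` steps and leaves the first `k - 1` steps free.
-/

open Finset

theorem card_filter_powerset_card_filter_eq {α : Type*} (t : Finset α) (p : α → Prop)
    [DecidablePred p] (i : ℕ) :
    #{s ∈ t.powerset | #{a ∈ s | p a} = i} =
      (#{a ∈ t | p a}).choose i * 2 ^ #{a ∈ t | ¬ p a} := by
  classical
  have filter_union_of_subset {u v : Finset α} (hu : u ⊆ {a ∈ t | p a})
      (hv : v ⊆ {a ∈ t | ¬ p a}) : {a ∈ u ∪ v | p a} = u ∧ {a ∈ u ∪ v | ¬ p a} = v := by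
    have hup : ∀ a ∈ u, p a := fun a ha ↦ (mem_filter.1 (hu ha)).2
    have hvp : ∀ a ∈ v, ¬ p a := fun a ha ↦ (mem_filter.1 (hv ha)).2
    constructor
    · rw [filter_union, filter_true_of_mem hup, filter_false_of_mem hvp, union_empty]
    · rw [filter_union, filter_true_of_mem hvp,
        filter_false_of_mem fun a ha ↦ not_not_intro (hup a ha), empty_union]
  rw [← card_powersetCard, ← card_powerset, ← card_product]
  refine card_bij' (fun s _ ↦ ({a ∈ s | p a}, {a ∈ s | ¬ p a})) (fun u _ ↦ u.1 ∪ u.2) ?_ ?_ ?_ ?_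
  · intro s hs
    rw [mem_filter, mem_powerset] at hs
    obtain ⟨hst, hsi⟩ := hs
    exact mem_product.2 ⟨mem_powersetCard.2 ⟨filter_subset_filter _ hst, hsi⟩,
      mem_powerset.2 (filter_subset_filter _ hst)⟩
  · rintro ⟨u, v⟩ huv
    simp only [mem_product, mem_powersetCard, mem_powerset] at huv
    obtain ⟨⟨hu, rfl⟩, hv⟩ := huv
    rw [mem_filter, mem_powerset, (filter_union_of_subset hu hv).1]
    exact ⟨union_subset (hu.trans (filter_subset _ _)) (hv.trans (filter_subset _ _)), rfl⟩
  · exact fun s _ ↦ filter_union_filter_not_eq p s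
  · rintro ⟨u, v⟩ huv
    simp only [mem_product, mem_powersetCard, mem_powerset] at huv
    obtain ⟨⟨hu, -⟩, hv⟩ := huv
    exact Prod.ext_iff.2 (filter_union_of_subset hu hv)

/-- Scans of a sequence of length `n + 1`, encoded by their starting indices. The indexing is
shifted to start at `0`: `f j` is the starting index of the block of size `j + 1`. -/
def IsScan {n : ℕ} (f : Fin (n + 1) → ℕ) : Prop :=
  f (Fin.last n) = 1 ∧ ∀ j : Fin n, f j.castSucc = f j.succ ∨ f j.castSucc = f j.succ + 1

/-- The steps `j → j + 1` at which `f` decreases by one; for a scan, these are all the steps at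
which it is not constant. -/
def descents {n : ℕ} (f : Fin (n + 1) → ℕ) : Finset (Fin n) :=
  {j | f j.castSucc = f j.succ + 1}

/-- The scan whose set of descents is `s`. -/
def scanOfDescents {n : ℕ} (s : Finset (Fin n)) (k : Fin (n + 1)) : ℕ :=
  #{j ∈ s | k ≤ j.castSucc} + 1

section Descents

variable {n : ℕ}

theorem scanOfDescents_last (s : Finset (Fin n)) : scanOfDescents s (Fin.last n) = 1 := by
  simp [scanOfDescents, Fin.last_le_iff]

theorem scanOfDescents_castSucc (s : Finset (Fin n)) (j : Fin n) :
    scanOfDescents s j.castSucc = scanOfDescents s j.succ + if j ∈ s then 1 else 0 := by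
  have split_at_j : {l ∈ s | j.castSucc ≤ l.castSucc} =
      {l ∈ s | j.succ ≤ l.castSucc} ∪ {l ∈ s | l = j} := by
    rw [← filter_or]
    refine filter_congr fun l _ ↦ ?_
    rw [Fin.castSucc_le_castSucc_iff, Fin.succ_le_castSucc_iff, le_iff_lt_or_eq, eq_comm]
  have disj : Disjoint {l ∈ s | j.succ ≤ l.castSucc} {l ∈ s | l = j} :=
    disjoint_filter.2 fun l _ hl hlj ↦ (Fin.succ_le_castSucc_iff.1 hl).ne' hlj
  rw [scanOfDescents, scanOfDescents, split_at_j, card_union_of_disjoint disj, filter_eq',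
    apply_ite card, card_singleton, card_empty, add_right_comm]

theorem isScan_scanOfDescents (s : Finset (Fin n)) : IsScan (scanOfDescents s) := by
  refine ⟨scanOfDescents_last s, fun j ↦ ?_⟩
  rw [scanOfDescents_castSucc]
  split_ifs
  · exact Or.inr rfl
  · exact Or.inl rfl

theorem descents_scanOfDescents (s : Finset (Fin n)) : descents (scanOfDescents s) = s := by
  ext j
  simp [descents, scanOfDescents_castSucc]

theorem scanOfDescents_injective :
    Function.Injective (scanOfDescents : Finset (Fin n) → Fin (n + 1) → ℕ) :=
  Function.LeftInverse.injective descents_scanOfDescents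

theorem IsScan.scanOfDescents_descents {f : Fin (n + 1) → ℕ} (hf : IsScan f) :
    scanOfDescents (descents f) = f := by
  ext k
  induction k using Fin.reverseInduction with
  | last => rw [scanOfDescents_last, hf.1]
  | cast j ih =>
    rw [scanOfDescents_castSucc, ih]
    rcases hf.2 j with h | h <;> simp [descents, h]

theorem IsScan.pos {f : Fin (n + 1) → ℕ} (hf : IsScan f) (k : Fin (n + 1)) : 0 < f k := by
  rw [← hf.scanOfDescents_descents]
  exact Nat.succ_pos _

theorem card_filter_not_le_castSucc (k : Fin (n + 1)) : #{j : Fin n | ¬ k ≤ j.castSucc} = k := by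
  simpa [Fin.lt_def, Nat.lt_succ_iff.1 k.is_lt] using Fin.card_filter_val_lt (n := n) (m := k)

theorem card_filter_le_castSucc (k : Fin (n + 1)) : #{j : Fin n | k ≤ j.castSucc} = n - k := by
  have card_add := card_filter_add_card_filter_not (s := univ) fun j : Fin n ↦ k ≤ j.castSucc
  rw [card_filter_not_le_castSucc, card_fin] at card_add
  omega

theorem ncard_isScan_apply_eq (k : Fin (n + 1)) (i : ℕ) :
    {f : Fin (n + 1) → ℕ | IsScan f ∧ f k = i + 1}.ncard = (n - k).choose i * 2 ^ (k : ℕ) := by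
  have scans_eq_image : {f : Fin (n + 1) → ℕ | IsScan f ∧ f k = i + 1} =
      scanOfDescents '' ({s | #{j ∈ s | k ≤ j.castSucc} = i} : Finset (Finset (Fin n))) := by
    ext f
    simp only [Set.mem_image, mem_coe, mem_filter, mem_univ, true_and]
    constructor
    · rintro ⟨hf, hk⟩
      rw [← hf.scanOfDescents_descents] at hk
      exact ⟨descents f, Nat.succ_injective hk, hf.scanOfDescents_descents⟩
    · rintro ⟨s, rfl, rfl⟩
      exact ⟨isScan_scanOfDescents s, rfl⟩
  rw [scans_eq_image, Set.ncard_image_of_injective _ scanOfDescents_injective,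
    Set.ncard_coe_finset, ← powerset_univ, card_filter_powerset_card_filter_eq,
    card_filter_le_castSucc, card_filter_not_le_castSucc]

end Descents

/-- Corollary 3.1: for `n ≥ 1`, `1 ≤ k ≤ n`, `1 ≤ i ≤ n - k + 1`, the number
of scans of a sequence of length `n` — encoded by starting indices `(i_1, …, i_n)`, i.e.
sequences of positive integers with `i_n = 1` and `i_j ∈ {i_{j+1}, i_{j+1} + 1}` for
`1 ≤ j ≤ n-1` — whose block of size `k` starts at `i`, i.e. with `i_k = i`, equals
`(n-k).choose (i-1) * 2^(k-1)`. Index `j ∈ {1, …, n}` is represented by `m : Fin n` with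
`(m : ℕ) = j - 1`. -/
theorem card_scans_through_block (n k i : ℕ) (hn : 1 ≤ n)
    (hk1 : 1 ≤ k) (hkn : k ≤ n) (hi1 : 1 ≤ i) (hin : i ≤ n - k + 1) :
    {f : Fin n → ℕ |
        (∀ j, 0 < f j) ∧
        (∀ j : Fin n, (j : ℕ) = n - 1 → f j = 1) ∧
        (∀ j l : Fin n, (l : ℕ) = (j : ℕ) + 1 → (f j = f l ∨ f j = f l + 1)) ∧
        (∀ j : Fin n, (j : ℕ) = k - 1 → f j = i)}.ncard
      = (n - k).choose (i - 1) * 2 ^ (k - 1) := by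
  obtain ⟨n, rfl⟩ := Nat.exists_eq_add_of_le' hn
  obtain ⟨k, rfl⟩ := Nat.exists_eq_add_of_le' hk1
  obtain ⟨i, rfl⟩ := Nat.exists_eq_add_of_le' hi1
  simp only [Nat.add_sub_add_right, Nat.add_sub_cancel]
  rw [← ncard_isScan_apply_eq ⟨k, hkn⟩ i]
  congr 1
  ext f
  constructor
  · rintro ⟨-, hlast, hstep, hk⟩
    exact ⟨⟨hlast _ rfl, fun j ↦ hstep _ _ rfl⟩, hk _ rfl⟩
  · rintro ⟨hf, hk⟩
    refine ⟨hf.pos, fun j hj ↦ ?_, fun j l hl ↦ ?_, fun j hj ↦ ?_⟩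
    · rw [show j = Fin.last n from Fin.ext hj, hf.1]
    · have hjn : (j : ℕ) < n := by omega
      rw [show l = (⟨j, hjn⟩ : Fin n).succ from Fin.ext hl]
      exact hf.2 ⟨j, hjn⟩
    · rw [show j = ⟨k, hkn⟩ from Fin.ext hj, hk]
end

section
/- Let (T_k)_{k≥1} be real random variables, μ ∈ ℝ, γ < 0, L slowly varying with L(k) > 0 for all k ≥ 1, and J a probability measure on ℝ such that n^{-γ} L(n) |T_n − μ| converges in distribution to J as n → ∞. If (k_n) are positive integers with k_n → ∞ and k_n/n → 0 as n → ∞, then k_n^{-γ} L(k_n) (T_n − μ) → 0 in probability, and consequently k_n^{-γ} L(k_n) |T_{k_n} − T_n| converges in distribution to J as n → ∞. -/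
open Filter MeasureTheory

/-!
Put `a n = n ^ (-γ) * L n`. If `a (k n) / a n → 0`, then
`a (k n) |T n - μ| = (a (k n) / a n) (a n |T n - μ|)` is a null sequence times a sequence
converging in distribution, so it tends to `0` in probability; since `a (k n) |T (k n) - T n|`
differs from `a (k n) |T (k n) - μ|` by at most `a (k n) |T n - μ|`, Slutsky's lemma gives the
second claim.

That `a (k n) / a n → 0` comes from a Potter-type bound. The function `h = log ∘ L ∘ exp` has
increments `h (x + u) - h x` vanishing at infinity for each `u`, hence uniformly for bounded `u`
because `h` is measurable. Chaining increments of length at most `1`, `h` grows more slowly than any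
linear function, i.e. `L` varies more slowly than any power.
-/

open Asymptotics Topology

section Increments

variable {F : Type*} [SeminormedAddCommGroup F] {h : ℝ → F}

theorem tendsto_measure_le_norm_add_sub (hmeas : StronglyMeasurable h)
    (hinc : ∀ u, Tendsto (fun x => h (x + u) - h x) atTop (𝓝 0)) {ν : Measure ℝ} {s : Set ℝ}
    (hs : MeasurableSet s) (hs_fin : ν s ≠ ⊤) {ε : ℝ} (hε : 0 < ε) :
    Tendsto (fun x => ν ({u | ε ≤ ‖h (x + u) - h x‖} ∩ s)) atTop (𝓝 0) := by
  refine tendsto_of_seq_tendsto fun x hx => ?_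
  have : IsFiniteMeasure (ν.restrict s) := isFiniteMeasure_restrict.2 hs_fin
  have hmeasure : TendstoInMeasure (ν.restrict s) (fun n u => h (x n + u) - h (x n)) atTop
      (fun _ => 0) :=
    tendstoInMeasure_of_tendsto_ae
      (fun n => ((hmeas.comp_measurable (measurable_const_add (x n))).sub
        stronglyMeasurable_const).aestronglyMeasurable)
      (ae_of_all _ fun u => (hinc u).comp hx)
  simpa only [Function.comp_def, sub_zero, Measure.restrict_apply' hs] using
    tendstoInMeasure_iff_norm.1 hmeasure ε hε

theorem exists_mem_notMem_add_notMem {G : Type*} [AddGroup G] [MeasurableSpace G]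
    [MeasurableAdd G] {ν : Measure G} [ν.IsAddRightInvariant] {s A B : Set G}
    (hlt : ν A + ν B < ν s) (g : G) :
    ∃ w ∈ s, w ∉ A ∧ w + g ∉ B := by
  by_contra! hcover
  have hsub : s ⊆ A ∪ (· + g) ⁻¹' B := fun w hw => or_iff_not_imp_left.2 (hcover w hw)
  refine hlt.not_ge ((measure_mono hsub).trans ((measure_union_le _ _).trans_eq ?_))
  rw [measure_preimage_add_right]

/-- The idea of the uniform convergence theorem: for each of `x` and `x + u`, the increments to
most points of a window of fixed length are small. The two windows overlap, so some point `x + w`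
is good for both. -/
theorem tendstoUniformlyOn_add_sub (hmeas : StronglyMeasurable h)
    (hinc : ∀ u, Tendsto (fun x => h (x + u) - h x) atTop (𝓝 0)) {K : Set ℝ}
    (hK : Bornology.IsBounded K) :
    TendstoUniformlyOn (fun x u => h (x + u) - h x) 0 atTop K := by
  obtain ⟨c, hc, hKc⟩ := hK.exists_pos_norm_le
  rw [Metric.tendstoUniformlyOn_iff]
  intro ε hε
  set bad : ℝ → Set ℝ := fun x => {w | ε / 2 ≤ ‖h (x + w) - h x‖} ∩ Set.Icc (-(c + 1)) (c + 1)
  have hgood {x w : ℝ} (hw : w ∈ Set.Icc (-(c + 1)) (c + 1)) (hbad : w ∉ bad x) :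
      ‖h (x + w) - h x‖ < ε / 2 := not_le.1 fun hle => hbad ⟨hle, hw⟩
  obtain ⟨X, hX⟩ := eventually_atTop.1 <| (tendsto_measure_le_norm_add_sub hmeas hinc
    (ν := volume) measurableSet_Icc measure_Icc_lt_top.ne (half_pos hε)).eventually_lt_const one_pos
  filter_upwards [eventually_ge_atTop (X + c)] with x hx u hu
  obtain ⟨hcu, huc⟩ := abs_le.1 (hKc u hu)
  have hsmall : volume (bad x) + volume (bad (x + u)) < volume (Set.Icc (-1 : ℝ) 1) :=
    calc volume (bad x) + volume (bad (x + u)) < 1 + 1 :=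
          ENNReal.add_lt_add (hX x (by linarith)) (hX (x + u) (by linarith))
      _ = volume (Set.Icc (-1 : ℝ) 1) := by rw [Real.volume_Icc]; norm_num
  obtain ⟨w, ⟨hw, hw'⟩, hwx, hwu⟩ := exists_mem_notMem_add_notMem hsmall (-u)
  have hxw := hgood ⟨by linarith, by linarith⟩ hwx
  have hxuw := hgood ⟨by linarith, by linarith⟩ hwu
  rw [show x + u + (w + -u) = x + w by ring] at hxuw
  calc dist ((0 : ℝ → F) u) (h (x + u) - h x)
      = ‖(h (x + w) - h x) - (h (x + w) - h (x + u))‖ := by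
        rw [Pi.zero_apply, dist_zero_left, sub_sub_sub_cancel_left]
    _ ≤ ‖h (x + w) - h x‖ + ‖h (x + w) - h (x + u)‖ := norm_sub_le _ _
    _ < ε := by linarith

theorem dist_le_mul_sub_add_one {E : Type*} [PseudoMetricSpace E] {f : ℝ → E}
    {X ε : ℝ} (hstep : ∀ x ≥ X, ∀ u ∈ Set.Icc (0 : ℝ) 1, dist (f x) (f (x + u)) ≤ ε) {x y : ℝ}
    (hx : X ≤ x) (hxy : x ≤ y) :
    dist (f x) (f y) ≤ ε * (y - x + 1) := by
  set N : ℕ := ⌊y - x⌋₊ + 1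
  set u : ℝ := (y - x) / N
  have hN : (0 : ℝ) < N := by positivity
  have hlt : y - x < N := by simpa only [N, Nat.cast_add_one] using Nat.lt_floor_add_one (y - x)
  have hu : u ∈ Set.Icc (0 : ℝ) 1 := ⟨div_nonneg (by linarith) hN.le, (div_le_one hN).2 hlt.le⟩
  have hε : 0 ≤ ε := dist_nonneg.trans (hstep x hx u hu)
  have hchain := dist_le_range_sum_of_dist_le (f := fun i : ℕ => f (x + i * u)) N
    (d := fun _ => ε) fun {i} _ => by
      have := hstep (x + i * u) (by nlinarith [hu.1, (Nat.cast_nonneg i : (0 : ℝ) ≤ i)]) u hu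
      rwa [add_assoc, ← add_one_mul, ← Nat.cast_add_one] at this
  calc dist (f x) (f y) ≤ N * ε := by
        simpa [u, mul_div_cancel₀ _ hN.ne'] using hchain
    _ = ε * (⌊y - x⌋₊ + 1) := by rw [mul_comm, Nat.cast_add_one]
    _ ≤ ε * (y - x + 1) := by gcongr; exact Nat.floor_le (by linarith)

theorem eventually_forall_ge_dist_le_mul_sub_add_one (hmeas : StronglyMeasurable h)
    (hinc : ∀ u, Tendsto (fun x => h (x + u) - h x) atTop (𝓝 0)) {ε : ℝ} (hε : 0 < ε) :
    ∀ᶠ x in atTop, ∀ y ≥ x, dist (h x) (h y) ≤ ε * (y - x + 1) := by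
  obtain ⟨X, hX⟩ := eventually_atTop.1 <| Metric.tendstoUniformlyOn_iff.1
    (tendstoUniformlyOn_add_sub hmeas hinc (Metric.isBounded_Icc 0 1)) ε hε
  filter_upwards [eventually_ge_atTop X] with x hx y hxy
  refine dist_le_mul_sub_add_one (fun z hz u hu => ?_) hx hxy
  have hzu := hX z hz u hu
  rw [Pi.zero_apply, dist_zero_left, ← dist_eq_norm, dist_comm] at hzu
  exact hzu.le

end Increments

/-- Slow variation at infinity in the sense of Karamata. Measurability is part of the notion, and
`L` is unconstrained on bounded sets. -/
structure IsSlowlyVarying (L : ℝ → ℝ) : Prop where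
  measurable : Measurable L
  eventually_pos : ∀ᶠ x in atTop, 0 < L x
  tendsto_div : ∀ t : ℝ, 0 < t → Tendsto (fun x => L (t * x) / L x) atTop (𝓝 1)

namespace IsSlowlyVarying

variable {L : ℝ → ℝ}

theorem tendsto_log_exp_add_sub (hL : IsSlowlyVarying L) (u : ℝ) :
    Tendsto (fun x => Real.log (L (Real.exp (x + u))) - Real.log (L (Real.exp x))) atTop
      (𝓝 0) := by
  have hlog := ((hL.tendsto_div _ (Real.exp_pos u)).comp Real.tendsto_exp_atTop).log one_ne_zero
  rw [Real.log_one] at hlog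
  have hpos : ∀ᶠ x in atTop, 0 < L (Real.exp x) :=
    Real.tendsto_exp_atTop.eventually hL.eventually_pos
  refine hlog.congr' ?_
  filter_upwards [hpos, (tendsto_atTop_add_const_right _ u tendsto_id).eventually hpos]
    with x hx hxu
  rw [Function.comp_apply, ← Real.exp_add, add_comm u]
  exact Real.log_div hxu.ne' hx.ne'

/-- Potter's bound with the ratios cleared. -/
theorem eventually_forall_ge_rpow_mul_le (hL : IsSlowlyVarying L) {ρ : ℝ} (hρ : 0 < ρ) :
    ∀ᶠ x in atTop, ∀ y ≥ x, x ^ ρ * L x ≤ Real.exp ρ * (y ^ ρ * L y) := by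
  have hlin := eventually_forall_ge_dist_le_mul_sub_add_one
    (Real.measurable_log.comp (hL.measurable.comp Real.measurable_exp)).stronglyMeasurable
    hL.tendsto_log_exp_add_sub hρ
  filter_upwards [Real.tendsto_log_atTop.eventually hlin, eventually_gt_atTop 0,
    eventually_forall_ge_atTop.2 hL.eventually_pos] with x hx hx0 hLpos y hxy
  have hy0 : 0 < y := hx0.trans_le hxy
  have hlog := (le_abs_self _).trans (hx (Real.log y) (Real.log_le_log hx0 hxy))
  simp only [Function.comp_apply, Real.exp_log hx0, Real.exp_log hy0] at hlog
  calc x ^ ρ * L x = Real.exp (ρ * Real.log x + Real.log (L x)) := by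
        rw [Real.exp_add, Real.exp_log (hLpos x le_rfl), Real.rpow_def_of_pos hx0, mul_comm ρ]
    _ ≤ Real.exp (ρ + (ρ * Real.log y + Real.log (L y))) := Real.exp_le_exp.2 (by linarith)
    _ = Real.exp ρ * (y ^ ρ * L y) := by
        rw [Real.exp_add, Real.exp_add, Real.exp_log (hLpos y hxy), Real.rpow_def_of_pos hy0,
          mul_comm ρ]

theorem isLittleO_rpow_mul (hL : IsSlowlyVarying L) {ρ : ℝ} (hρ : 0 < ρ) {ι : Type*}
    {l : Filter ι} {u v : ι → ℝ} (hu : Tendsto u l atTop) (hv : 0 ≤ᶠ[l] v) (huv : u =o[l] v) :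
    (fun i => u i ^ ρ * L (u i)) =o[l] fun i => v i ^ ρ * L (v i) := by
  have hle : ∀ᶠ i in l, u i ≤ v i := by
    filter_upwards [huv.bound one_pos, hv] with i hi hvi
    rw [one_mul, Real.norm_of_nonneg hvi] at hi
    exact (le_abs_self _).trans hi
  -- Potter's bound only gives `O`; half of the exponent is kept aside to turn it into `o`.
  have hhalf : (fun i => u i ^ (ρ / 2) * L (u i)) =O[l] fun i => v i ^ (ρ / 2) * L (v i) := by
    refine IsBigO.of_bound (Real.exp (ρ / 2)) ?_
    filter_upwards [hu.eventually (hL.eventually_forall_ge_rpow_mul_le (half_pos hρ)), hle,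
      hu.eventually (eventually_forall_ge_atTop.2 hL.eventually_pos),
      hu.eventually_ge_atTop 0] with i hpotter hi hLpos hui
    have hLu := hLpos _ le_rfl
    have hLv := hLpos _ hi
    have hvi := hui.trans hi
    rw [Real.norm_of_nonneg (by positivity), Real.norm_of_nonneg (by positivity)]
    exact hpotter _ hi
  refine ((huv.rpow (half_pos hρ) hv).mul_isBigO hhalf).congr' ?_ ?_
  · filter_upwards [hu.eventually_gt_atTop 0] with i hi
    rw [← mul_assoc, ← Real.rpow_add hi, add_halves]
  · filter_upwards [hu.eventually_gt_atTop 0, hle] with i hui hi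
    rw [← mul_assoc, ← Real.rpow_add (hui.trans_le hi), add_halves]

end IsSlowlyVarying

section Distribution

variable {ι Ω Ω' : Type*} {mΩ : MeasurableSpace Ω} {mΩ' : MeasurableSpace Ω'} {P : Measure Ω}
  [IsProbabilityMeasure P] {P' : Measure Ω'} [IsProbabilityMeasure P'] {l : Filter ι}

theorem tendstoInDistribution_id_iff {E : Type*} [TopologicalSpace E] [MeasurableSpace E]
    [OpensMeasurableSpace E] {J : Measure E} [IsProbabilityMeasure J] {X : ι → Ω → E}
    (hX : ∀ i, AEMeasurable (X i) P) :
    TendstoInDistribution X l id (fun _ => P) J ↔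
      ∀ f : BoundedContinuousFunction E ℝ,
        Tendsto (fun i => ∫ ω, f (X i ω) ∂P) l (𝓝 (∫ x, f x ∂J)) := by
  have hmap (f : BoundedContinuousFunction E ℝ) (i : ι) :
      ∫ x, f x ∂P.map (X i) = ∫ ω, f (X i ω) ∂P :=
    integral_map (hX i) f.continuous.measurable.aestronglyMeasurable
  constructor
  · intro h f
    simpa [hmap] using ProbabilityMeasure.tendsto_iff_forall_integral_tendsto.1 h.tendsto f
  · intro h
    refine ⟨hX, aemeasurable_id, ProbabilityMeasure.tendsto_iff_forall_integral_tendsto.2 ?_⟩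
    simpa [hmap] using h

theorem tendstoInDistribution_comp_tendsto {κ E : Type*} [TopologicalSpace E] [MeasurableSpace E]
    [OpensMeasurableSpace E] {l' : Filter κ} {X : ι → Ω → E} {Z : Ω' → E}
    (hX : TendstoInDistribution X l Z (fun _ => P) P') {k : κ → ι} (hk : Tendsto k l' l) :
    TendstoInDistribution (fun i => X (k i)) l' Z (fun _ => P) P' :=
  ⟨fun i => hX.forall_aemeasurable (k i), hX.aemeasurable_limit, hX.tendsto.comp hk⟩

theorem tendstoInMeasure_of_tendstoInDistribution_const {E : Type*} [PseudoMetricSpace E]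
    [MeasurableSpace E] [OpensMeasurableSpace E] {X : ι → Ω → E} {c : E}
    (hX : TendstoInDistribution X l (fun _ => c) (fun _ => P) P') :
    TendstoInMeasure P X l fun _ => c := by
  rw [tendstoInMeasure_iff_dist]
  intro ε hε
  set far : Set E := {x | ε ≤ dist x c}
  have hcont : Continuous fun x : E => dist x c := by fun_prop
  have hfar : MeasurableSet far := (isClosed_le continuous_const hcont).measurableSet
  have hfrontier : P'.map (fun _ => c) (frontier far) = 0 := by
    refine measure_mono_null (frontier_le_subset_eq continuous_const hcont) ?_
    have hsphere : MeasurableSet {x : E | ε = dist x c} :=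
      (isClosed_eq continuous_const hcont).measurableSet
    simp [Measure.map_const, hsphere, hε.ne']
  have hlim := ProbabilityMeasure.tendsto_measure_of_null_frontier_of_tendsto' hX.tendsto hfrontier
  have hzero : P'.map (fun _ => c) far = 0 := by
    simp [Measure.map_const, far, hfar, hε]
  simp only [ProbabilityMeasure.coe_mk, hzero] at hlim
  refine hlim.congr fun i => ?_
  rw [Measure.map_apply_of_aemeasurable (hX.forall_aemeasurable i) hfar]
  rfl

variable [l.IsCountablyGenerated]

theorem tendstoInMeasure_smul_zero_of_isLittleO {F : Type*} [SeminormedAddCommGroup F]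
    [NormedSpace ℝ F] [MeasurableSpace F] [BorelSpace F] [SecondCountableTopology F]
    {X : ι → Ω → F} {Z : Ω' → F} {a b : ι → ℝ}
    (hX : TendstoInDistribution (fun i ω => a i • X i ω) l Z (fun _ => P) P') (hba : b =o[l] a) :
    TendstoInMeasure P (fun i ω => b i • X i ω) l fun _ => 0 := by
  have hratio : TendstoInMeasure P (fun i (_ : Ω) => b i / a i) l fun _ => 0 := by
    rw [tendstoInMeasure_iff_dist]
    intro ε hε
    refine tendsto_nhds_of_eventually_eq ?_
    filter_upwards [Metric.tendsto_nhds.1 hba.tendsto_div_nhds_zero ε hε] with i hi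
    simp only [hi.not_ge, Set.ofPred_false, measure_empty]
  have hmul := hX.continuous_comp_prodMk_of_tendstoInMeasure_const
    (g := fun p : F × ℝ => p.2 • p.1) (by fun_prop) hratio fun _ => aemeasurable_const
  simp only [zero_smul] at hmul
  refine (tendstoInMeasure_of_tendstoInDistribution_const hmul).congr' ?_ .rfl
  filter_upwards [hba.eventually_mul_div_cancel] with i hi
  exact .of_forall fun ω => (smul_smul _ _ _).trans (congrArg (· • X i ω) hi)

theorem tendstoInDistribution_mul_dist {E : Type*} [PseudoMetricSpace E] {S T R : ι → Ω → E}
    {Z : Ω' → ℝ} {b : ι → ℝ}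
    (hS : TendstoInDistribution (fun i ω => b i * dist (S i ω) (R i ω)) l Z (fun _ => P) P')
    (hT : TendstoInMeasure P (fun i ω => b i * dist (T i ω) (R i ω)) l fun _ => 0)
    (hmeas : ∀ i, AEMeasurable (fun ω => b i * dist (S i ω) (T i ω)) P) :
    TendstoInDistribution (fun i ω => b i * dist (S i ω) (T i ω)) l Z (fun _ => P) P' := by
  refine tendstoInDistribution_of_tendstoInMeasure_sub _ _ hS ?_ hmeas
  rw [tendstoInMeasure_iff_norm] at hT ⊢
  intro ε hε
  refine tendsto_of_tendsto_of_tendsto_of_le_of_le tendsto_const_nhds (hT ε hε)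
    (fun _ => zero_le) fun i => measure_mono fun ω (hω : ε ≤ _) => hω.trans ?_
  simp only [Pi.sub_apply, Pi.zero_apply, sub_zero, ← mul_sub, norm_mul]
  gcongr
  rw [Real.norm_eq_abs, Real.norm_of_nonneg dist_nonneg, dist_comm (S i ω), dist_comm (S i ω)]
  exact abs_dist_sub_le _ _ _

end Distribution

theorem shifted_scaling_weak_convergence_general
    {Ω E : Type*} [MeasurableSpace Ω] (P : Measure Ω) [IsProbabilityMeasure P]
    [PseudoMetricSpace E] [SecondCountableTopology E] [MeasurableSpace E] [OpensMeasurableSpace E]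
    (T : ℕ → Ω → E) (hT : ∀ n, Measurable (T n)) (μ : E) (γ : ℝ) (hγ : γ < 0)
    (L : ℝ → ℝ) (hL : IsSlowlyVarying L) (J : Measure ℝ) [IsProbabilityMeasure J]
    (hdist : ∀ f : BoundedContinuousFunction ℝ ℝ,
      Tendsto (fun n : ℕ => ∫ ω, f ((n : ℝ) ^ (-γ) * L n * dist (T n ω) μ) ∂P)
        atTop (𝓝 (∫ x, f x ∂J)))
    (k : ℕ → ℕ) (hktop : Tendsto k atTop atTop)
    (hkn : Tendsto (fun n : ℕ => (k n : ℝ) / n) atTop (𝓝 0)) :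
    (∀ ε : ℝ, 0 < ε →
      Tendsto (fun n : ℕ => P {ω | ε < |(k n : ℝ) ^ (-γ) * L (k n) * dist (T n ω) μ|})
        atTop (𝓝 0)) ∧
    (∀ f : BoundedContinuousFunction ℝ ℝ,
      Tendsto (fun n : ℕ => ∫ ω, f ((k n : ℝ) ^ (-γ) * L (k n) * dist (T (k n) ω) (T n ω)) ∂P)
        atTop (𝓝 (∫ x, f x ∂J))) := by
  have hlittle : (fun n => (k n : ℝ)) =o[atTop] fun n : ℕ => (n : ℝ) := by
    refine (isLittleO_iff_tendsto' ?_).2 hkn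
    filter_upwards [eventually_ne_atTop 0] with n hn h0 using absurd h0 (Nat.cast_ne_zero.2 hn)
  have hscale := hL.isLittleO_rpow_mul (neg_pos.2 hγ) (tendsto_natCast_atTop_atTop.comp hktop)
    (.of_forall fun n : ℕ => n.cast_nonneg) hlittle
  have hX := (tendstoInDistribution_id_iff fun n =>
    (((hT n).dist measurable_const).const_mul _).aemeasurable).2 hdist
  have hprob := tendstoInMeasure_smul_zero_of_isLittleO hX hscale
  have hmeas (n : ℕ) : AEMeasurable
      (fun ω => (k n : ℝ) ^ (-γ) * L (k n) * dist (T (k n) ω) (T n ω)) P :=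
    (((hT (k n)).dist (hT n)).const_mul _).aemeasurable
  refine ⟨fun ε hε => ?_, (tendstoInDistribution_id_iff hmeas).1 <|
    tendstoInDistribution_mul_dist (tendstoInDistribution_comp_tendsto hX hktop) hprob hmeas⟩
  refine tendsto_of_tendsto_of_tendsto_of_le_of_le tendsto_const_nhds
    (tendstoInMeasure_iff_norm.1 hprob ε hε) (fun _ => zero_le)
    fun n => measure_mono fun ω (hω : ε < _) => ?_
  simpa using hω.le

/-- if `n^{-γ} L(n)|T_n − μ|` converges in distribution to `J` (with `γ < 0`
and `L` slowly varying, `L(k) > 0` for `k ≥ 1`), and `k_n → ∞` with `k_n/n → 0`, then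
`k_n^{-γ} L(k_n)(T_n − μ) → 0` in probability, and consequently
`k_n^{-γ} L(k_n)|T_{k_n} − T_n|` converges in distribution to `J`. -/
theorem shifted_scaling_weak_convergence
    {Ω : Type*} [MeasurableSpace Ω] (P : Measure Ω) [IsProbabilityMeasure P]
    (T : ℕ → Ω → ℝ) (hTmeas : ∀ k, Measurable (T k))
    (μ γ : ℝ) (hγ : γ < 0)
    (L : ℝ → ℝ)
    (hLmeas : Measurable L) (hLpos : ∀ᶠ x in atTop, 0 < L x)
    (hLslow : ∀ t : ℝ, 0 < t →
      Tendsto (fun x => L (t * x) / L x) atTop (nhds 1))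
    (hLposk : ∀ k : ℕ, 1 ≤ k → 0 < L k)
    (J : Measure ℝ) [IsProbabilityMeasure J]
    (hdist : ∀ f : BoundedContinuousFunction ℝ ℝ,
      Tendsto (fun n : ℕ => ∫ ω, f ((n : ℝ) ^ (-γ) * L n * |T n ω - μ|) ∂P)
        atTop (nhds (∫ x, f x ∂J)))
    (k : ℕ → ℕ) (hk1 : ∀ n, 1 ≤ k n)
    (hktop : Tendsto k atTop atTop)
    (hkn : Tendsto (fun n : ℕ => (k n : ℝ) / n) atTop (nhds 0)) :
    (∀ ε : ℝ, 0 < ε →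
      Tendsto (fun n : ℕ =>
          P {ω | ε < |((k n : ℝ)) ^ (-γ) * L (k n) * (T n ω - μ)|}) atTop (nhds 0)) ∧
    (∀ f : BoundedContinuousFunction ℝ ℝ,
      Tendsto (fun n : ℕ =>
          ∫ ω, f (((k n : ℝ)) ^ (-γ) * L (k n) * |T (k n) ω - T n ω|) ∂P)
        atTop (nhds (∫ x, f x ∂J))) := by
  simpa only [Real.dist_eq, abs_mul, abs_abs] using shifted_scaling_weak_convergence_general P T
    hTmeas μ γ hγ L ⟨hLmeas, hLpos, hLslow⟩ J hdist k hktop hkn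
end
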